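/- For all integers b, c ≥ 0, the polynomial Q_{b,c} satisfies the q-difference equation E53: −x·y·q^{−2(b+2c)}·Q_{b,c}(x,y,z,q²w) + (x−1)·Q_{b,c}(q^{−4}x,q²y,z,w) + x·(y−1)·q^{−4c}·Q_{b,c}(x,q^{−2}y,q⁴z,w) + Q_{b,c}(x,y,z,w) = 0. -/

import Mathlib

noncomputable section

open MvPolynomial

/-- The field `K = ℚ(q)` of rational functions in `q` over `ℚ`. -/
abbrev K : Type := RatFunc ℚ

/-- The variable `q ∈ K = ℚ(q)`. -/
def q : K := RatFunc.X

/-- The polynomial ring `K[x,y,z,w]`. -/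
abbrev P4 : Type := MvPolynomial (Fin 4) K

def xP : P4 := X 0
def yP : P4 := X 1
def zP : P4 := X 2
def wP : P4 := X 3

/-- The `K`-algebra map `K[x,y,z,w] → K[x,y,z,w]` rescaling the variables:
`x ↦ q^a·x`, `y ↦ q^b·y`, `z ↦ q^c·z`, `w ↦ q^d·w`. -/
def scl (a b c d : ℤ) : P4 →ₐ[K] P4 :=
  aeval ![C (q ^ a) * X 0, C (q ^ b) * X 1, C (q ^ c) * X 2, C (q ^ d) * X 3]

/-- The polynomials `Q_{b,0}(x,y,z,w)`, defined by the recursion (rec1) of the paper. -/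
def Qb0 : ℕ → P4
  | 0 => 1
  | b + 1 =>
      C (q ^ (4 * (b : ℤ))) * wP * yP * (zP - 1) * scl 0 0 (-4) 0 (Qb0 b)
    + C (q ^ (4 * (b : ℤ))) * wP * xP * (yP - 1) * yP * zP * scl 0 (-2) 0 0 (Qb0 b)
    + C (q ^ (6 * (b : ℤ))) * (wP - 1) * (yP - 1) * scl 0 (-2) 0 (-2) (Qb0 b)
    + C (q ^ (4 * (b : ℤ))) * wP * (xP - 1) * yP * (zP - 1) * scl (-4) 2 (-4) 0 (Qb0 b)
    + C (q ^ (6 * (b : ℤ))) * (wP - 1) * (xP - 1) * yP * scl (-4) 0 0 (-2) (Qb0 b)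

/-- The polynomials `Q_{b,c}(x,y,z,w)`: for `c ≥ 1` they are defined by the
recursion (rec2) of the paper, lowering `c`; for `c = 0` by `Qb0`. -/
def Q : ℕ → ℕ → P4
  | b, 0 => Qb0 b
  | b, c + 1 =>
      - (C (q ^ (4 * (b : ℤ) + 8 * (c : ℤ))) * wP ^ 2 * yP * (zP - 1) * zP)
          * scl 0 0 (-4) 0 (Q b c)
    + (C (q ^ (4 * (b : ℤ) + 4 * (c : ℤ) - 2)) * wP * xP * (yP - 1) * zP)
          * (C (q ^ (2 * (b : ℤ) + 4 * (c : ℤ) + 4)) - C (q ^ (2 : ℤ)) * wP * yP * zP)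
          * scl 0 (-2) 0 0 (Q b c)
    - (C (q ^ (6 * (b : ℤ) + 8 * (c : ℤ))) * (wP - 1) * wP * (yP - 1) * zP)
          * scl 0 (-2) 0 (-2) (Q b c)
    + (C (q ^ (4 * (b : ℤ) + 8 * (c : ℤ) - 2)) * wP * (xP - 1) * (zP - 1))
          * (C (q ^ (2 * (b : ℤ) + 4 * (c : ℤ) + 4)) - C (q ^ (2 : ℤ)) * wP * yP * zP)
          * scl (-4) 2 (-4) 0 (Q b c)
    + (C (q ^ (6 * (b : ℤ) + 8 * (c : ℤ) - 2)) * (wP - 1) * (xP - 1))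
          * (C (q ^ (2 * (b : ℤ) + 4 * (c : ℤ) + 4)) - C (q ^ (2 : ℤ)) * wP * yP * zP)
          * scl (-4) 0 0 (-2) (Q b c)

/-!
Let `E_{s,r}` be the `q`-difference operator of E53 with `q^{-2(b+2c)}` and `q^{-4c}` replaced by
constants `s` and `r`. There are `q`-difference operators `R` (`raiseB`) and `S` (`raiseC`),
depending on `s` and `r`, with `E_{q⁻²s, r} R = R' E_{s,r}` for some operator `R'` and
`E_{q⁻⁴s, q⁻⁴r} S = S E_{s,r}`. Multiplication by `w` and by `z` satisfies
`E_{q⁻²s, r} w = w E_{s,r}` and `E_{s, q⁻⁴r} z = z E_{s,r}`. Up to powers of `q`, the recursion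
in `b` is `Q_{b+1,0} = R Q_{b,0}`, and the recursion in `c` writes `Q_{b,c+1}` as a linear
combination of `S Q_{b,c}` and `wz R Q_{b,c}`. Hence `Q_{b,c}` stays in the kernel of the
corresponding `E_{s,r}`.
-/

theorem q_ne_zero : q ≠ 0 := RatFunc.X_ne_zero

theorem C_q_zpow_add (m n : ℤ) : (C (q ^ (m + n)) : P4) = C (q ^ m) * C (q ^ n) := by
  rw [zpow_add₀ q_ne_zero, C_mul]

theorem C_q_two_mul_C_q_neg_two : (C (q ^ (2 : ℤ)) * C (q ^ (-2 : ℤ)) : P4) = 1 := by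
  rw [← C_q_zpow_add, add_neg_cancel, zpow_zero, C_1]

theorem C_q_four : (C (q ^ (4 : ℤ)) : P4) = C (q ^ (2 : ℤ)) * C (q ^ (2 : ℤ)) := by
  rw [← C_q_zpow_add]
  rfl

theorem C_q_neg_four : (C (q ^ (-4 : ℤ)) : P4) = C (q ^ (-2 : ℤ)) * C (q ^ (-2 : ℤ)) := by
  rw [← C_q_zpow_add]
  rfl

section Scaling

variable (a b c d : ℤ)

theorem scl_C (r : K) : scl a b c d (C r) = C r := (scl a b c d).commutes r

theorem scl_xP : scl a b c d xP = C (q ^ a) * xP := by simp [scl, xP]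

theorem scl_yP : scl a b c d yP = C (q ^ b) * yP := by simp [scl, yP]

theorem scl_zP : scl a b c d zP = C (q ^ c) * zP := by simp [scl, zP]

theorem scl_wP : scl a b c d wP = C (q ^ d) * wP := by simp [scl, wP]

theorem scl_comp_scl (a' b' c' d' : ℤ) :
    (scl a b c d).comp (scl a' b' c' d') = scl (a + a') (b + b') (c + c') (d + d') := by
  ext1 i
  fin_cases i <;> simp [scl, zpow_add₀ q_ne_zero, algebraMap_eq, mul_assoc, mul_left_comm]

theorem scl_scl (a' b' c' d' : ℤ) (P : P4) :
    scl a b c d (scl a' b' c' d' P) = scl (a + a') (b + b') (c + c') (d + d') P :=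
  DFunLike.congr_fun (scl_comp_scl a b c d a' b' c' d') P

end Scaling

/-- The element `f · T` of the `q`-Weyl algebra, where `T` is the rescaling `scl a b c d`:
`q`-difference operators are sums of these. -/
def weightedScl (f : P4) (a b c d : ℤ) : Module.End K P4 :=
  LinearMap.mulLeft K f ∘ₗ (scl a b c d).toLinearMap

/-- The `q`-difference operator of E53, with the constants `q^{-2(b+2c)}` and `q^{-4c}` replaced
by arbitrary `s` and `r`. -/
def opE53 (s r : K) : Module.End K P4 :=
  1 + weightedScl (xP - 1) (-4) 2 0 0 + weightedScl (C r * xP * (yP - 1)) 0 (-2) 4 0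
    - weightedScl (C s * xP * yP) 0 0 0 2

/-- The operator of the recursion in `b`, multiplied by a power of `q` so that its coefficients
become polynomials in `s` and `r`. The value `t = 1` is the one in the recursion; moving the
operator past `opE53` turns it into `t = q²`. -/
def raiseB (t s r : K) : Module.End K P4 :=
  weightedScl (C s * wP * yP * (zP - 1)) 0 0 (-4) 0
    + weightedScl (C (t * s * r) * wP * xP * (yP - 1) * yP * zP) 0 (-2) 0 0
    + weightedScl (C r * (wP - 1) * (yP - 1)) 0 (-2) 0 (-2)
    + weightedScl (C (t * s) * wP * (xP - 1) * yP * (zP - 1)) (-4) 2 (-4) 0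
    + weightedScl (C (t * r) * (wP - 1) * (xP - 1) * yP) (-4) 0 0 (-2)

/-- The part of the recursion in `c` that comes with the factor `q^{2(b+2c)}`, normalized like
`raiseB`; the remaining part is a multiple of `wz · raiseB 1 s r`. -/
def raiseC (s r : K) : Module.End K P4 :=
  weightedScl (C (s * r) * wP * xP * (yP - 1) * zP) 0 (-2) 0 0
    + weightedScl (C s * wP * (xP - 1) * (zP - 1)) (-4) 2 (-4) 0
    + weightedScl (C r * (wP - 1) * (xP - 1)) (-4) 0 0 (-2)

section Operators

variable (s r : K) (P : P4)

theorem opE53_apply :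
    opE53 s r P = P + (xP - 1) * scl (-4) 2 0 0 P + C r * xP * (yP - 1) * scl 0 (-2) 4 0 P
      - C s * xP * yP * scl 0 0 0 2 P := rfl

theorem raiseB_apply (t : K) :
    raiseB t s r P = C s * wP * yP * (zP - 1) * scl 0 0 (-4) 0 P
      + C (t * s * r) * wP * xP * (yP - 1) * yP * zP * scl 0 (-2) 0 0 P
      + C r * (wP - 1) * (yP - 1) * scl 0 (-2) 0 (-2) P
      + C (t * s) * wP * (xP - 1) * yP * (zP - 1) * scl (-4) 2 (-4) 0 P
      + C (t * r) * (wP - 1) * (xP - 1) * yP * scl (-4) 0 0 (-2) P := rfl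

theorem raiseC_apply :
    raiseC s r P = C (s * r) * wP * xP * (yP - 1) * zP * scl 0 (-2) 0 0 P
      + C s * wP * (xP - 1) * (zP - 1) * scl (-4) 2 (-4) 0 P
      + C r * (wP - 1) * (xP - 1) * scl (-4) 0 0 (-2) P := rfl

theorem opE53_one_one_one : opE53 1 1 1 = 0 := by
  simp only [opE53_apply, map_one]
  ring

theorem opE53_wP_mul : opE53 (q ^ (-2 : ℤ) * s) r (wP * P) = wP * opE53 s r P := by
  simp only [opE53_apply, map_mul, scl_wP, zpow_zero, map_one]
  linear_combination -C s * xP * yP * wP * scl 0 0 0 2 P * C_q_two_mul_C_q_neg_two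

theorem opE53_zP_mul : opE53 s (q ^ (-4 : ℤ) * r) (zP * P) = zP * opE53 s r P := by
  simp only [opE53_apply, map_mul, scl_zP, zpow_zero, map_one, C_q_four, C_q_neg_four]
  linear_combination C r * xP * (yP - 1) * zP * scl 0 (-2) 4 0 P
    * (C (q ^ (2 : ℤ)) * C (q ^ (-2 : ℤ)) + 1) * C_q_two_mul_C_q_neg_two

-- This intertwining relation and the one for `raiseC` hold coefficientwise: both sides are
-- combinations of the same rescalings of `P`.
theorem opE53_raiseB :
    opE53 (q ^ (-2 : ℤ) * s) r (raiseB 1 s r P) = raiseB (q ^ (2 : ℤ)) s r (opE53 s r P) := by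
  simp only [opE53_apply, raiseB_apply, map_add, map_sub, map_mul, map_one, scl_C, scl_xP, scl_yP,
    scl_zP, scl_wP, scl_scl, Int.reduceAdd, Int.reduceNeg, zpow_zero, C_q_four, C_q_neg_four]
  grind [C_q_two_mul_C_q_neg_two]

theorem opE53_raiseC :
    opE53 (q ^ (-4 : ℤ) * s) (q ^ (-4 : ℤ) * r) (raiseC s r P) = raiseC s r (opE53 s r P) := by
  simp only [opE53_apply, raiseC_apply, map_add, map_sub, map_mul, map_one, scl_C, scl_xP, scl_yP,
    scl_zP, scl_wP, scl_scl, Int.reduceAdd, Int.reduceNeg, zpow_zero, C_q_four, C_q_neg_four]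
  grind [C_q_two_mul_C_q_neg_two]

theorem opE53_wP_mul_zP_mul_raiseB :
    opE53 (q ^ (-4 : ℤ) * s) (q ^ (-4 : ℤ) * r) (wP * (zP * raiseB 1 s r P)) =
      wP * (zP * raiseB (q ^ (2 : ℤ)) s r (opE53 s r P)) := by
  have hs : q ^ (-4 : ℤ) * s = q ^ (-2 : ℤ) * (q ^ (-2 : ℤ) * s) := by
    rw [← mul_assoc, ← zpow_add₀ q_ne_zero]
    rfl
  rw [hs, opE53_wP_mul, opE53_zP_mul, opE53_raiseB]

end Operators

theorem Qb0_succ (b : ℕ) :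
    Qb0 (b + 1) = q ^ (6 * (b : ℤ)) • raiseB 1 (q ^ (-2 * (b : ℤ))) 1 (Qb0 b) := by
  have h4 : 4 * (b : ℤ) = 6 * b + -2 * b := by ring
  simp only [Qb0, raiseB_apply, smul_eq_C_mul, one_mul, mul_one, map_one, h4, C_q_zpow_add]
  ring

theorem Q_succ (b c : ℕ) :
    Q b (c + 1) = q ^ (6 * (b : ℤ) + 12 * c - 2) •
      (q ^ (2 * (b : ℤ) + 4 * c + 4) •
          raiseC (q ^ (-2 * ((b : ℤ) + 2 * c))) (q ^ (-4 * (c : ℤ))) (Q b c)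
        - q ^ (2 : ℤ) •
          (wP * (zP * raiseB 1 (q ^ (-2 * ((b : ℤ) + 2 * c))) (q ^ (-4 * (c : ℤ))) (Q b c)))) := by
  rw [Q]
  set n : ℤ := 6 * b + 12 * c - 2 with hn
  set i : ℤ := -2 * (b + 2 * c) with hi
  set j : ℤ := -4 * c with hj
  have h₁ : 4 * (b : ℤ) + 8 * c = n + i + 2 := by linear_combination -hn - hi
  have h₂ : 4 * (b : ℤ) + 4 * c - 2 = n + i + j := by linear_combination -hn - hi - hj
  have h₃ : 6 * (b : ℤ) + 8 * c = n + j + 2 := by linear_combination -hn - hj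
  have h₄ : n + i + 2 - 2 = n + i := add_sub_cancel_right _ _
  have h₅ : n + j + 2 - 2 = n + j := add_sub_cancel_right _ _
  simp only [h₁, h₂, h₃, h₄, h₅, C_q_zpow_add n, C_q_zpow_add (n + _), raiseB_apply, raiseC_apply,
    smul_eq_C_mul, one_mul, C_mul]
  ring

theorem opE53_Qb0 (b : ℕ) : opE53 (q ^ (-2 * (b : ℤ))) 1 (Qb0 b) = 0 := by
  induction b with
  | zero => simpa [Qb0] using opE53_one_one_one
  | succ b ih =>
    have hs : q ^ (-2 * ((b + 1 : ℕ) : ℤ)) = q ^ (-2 : ℤ) * q ^ (-2 * (b : ℤ)) := by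
      rw [← zpow_add₀ q_ne_zero]
      push_cast
      ring_nf
    rw [Qb0_succ, map_smul, hs, opE53_raiseB, ih, map_zero, smul_zero]

theorem opE53_Q (b c : ℕ) :
    opE53 (q ^ (-2 * ((b : ℤ) + 2 * c))) (q ^ (-4 * (c : ℤ))) (Q b c) = 0 := by
  induction c with
  | zero => simpa [Q] using opE53_Qb0 b
  | succ c ih =>
    have hs : q ^ (-2 * ((b : ℤ) + 2 * (c + 1 : ℕ))) =
        q ^ (-4 : ℤ) * q ^ (-2 * ((b : ℤ) + 2 * c)) := by
      rw [← zpow_add₀ q_ne_zero]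
      push_cast
      ring_nf
    have hr : q ^ (-4 * ((c + 1 : ℕ) : ℤ)) = q ^ (-4 : ℤ) * q ^ (-4 * (c : ℤ)) := by
      rw [← zpow_add₀ q_ne_zero]
      push_cast
      ring_nf
    rw [Q_succ, hs, hr, map_smul, map_sub, map_smul, map_smul, opE53_raiseC,
      opE53_wP_mul_zP_mul_raiseB, ih]
    simp only [map_zero, mul_zero, smul_zero, sub_zero]

/-- the q-difference equation E53 for `Q_{b,c}`. -/
theorem Q_E53 (b c : ℕ) :
    - C (q ^ (-2 * ((b : ℤ) + 2 * (c : ℤ)))) * xP * yP * scl 0 0 0 2 (Q b c)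
    + (xP - 1) * scl (-4) 2 0 0 (Q b c)
    + C (q ^ (-4 * (c : ℤ))) * xP * (yP - 1) * scl 0 (-2) 4 0 (Q b c)
    + Q b c = 0 := by
  have h := opE53_Q b c
  rw [opE53_apply] at h
  linear_combination h
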